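/- arXiv:2203.02070 — 4 statements merged into one kernel-verified Lean document; each statement's English description precedes it below -/
import Mathlib

section
/- Let R be a commutative integral domain, let n ≥ 1, and let F and G be nonzero Laurent polynomials in n variables over R. Then the Newton polytope of the product F·G equals the Minkowski sum of the Newton polytopes of F and G: Δ(F·G) = Δ(F) + Δ(G), where + denotes the Minkowski sum {v₁ + v₂ : v₁ ∈ Δ(F), v₂ ∈ Δ(G)} of subsets of ℝⁿ. -/
/-!
A convex hull of a finite set is determined by the maxima of linear functionals over the set
(Hahn–Banach), so it suffices that, for every functional, the maximum over `supp (F * G)` is the sum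
of the maxima over `supp F` and `supp G`. The latter are attained on faces of the two supports.
Since `ℤⁿ` has unique sums, some pair of exponents from these two faces has a sum that arises from
no other pair in `supp F × supp G`; its coefficient in `F * G` is then a product of two nonzero
coefficients.
-/

open scoped Pointwise

noncomputable section

/-- The coordinatewise embedding of `ℤⁿ` into `ℝⁿ`. -/
def emb (n : ℕ) : (Fin n → ℤ) → (Fin n → ℝ) := fun u i => (u i : ℝ)

/-- The Newton polytope of a Laurent polynomial `F` in `n` variables over `R`:
the convex hull in `ℝⁿ` of the (finite) set of exponents `u ∈ ℤⁿ` at which the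
coefficient `[F]_u` is nonzero. -/
def newton {R : Type*} [CommSemiring R] {n : ℕ} (F : AddMonoidAlgebra R (Fin n → ℤ)) :
    Set (Fin n → ℝ) :=
  convexHull ℝ (emb n '' {u | F.coeff u ≠ 0})

section UniqueSums

variable {A M : Type*} [Add A] [UniqueSums A] [Add M] [LinearOrder M] [AddLeftStrictMono M]
  [AddRightStrictMono M]

theorem exists_isMaxOn_uniqueAdd (f : A →ₙ+ M) {s t : Finset A} (hs : s.Nonempty)
    (ht : t.Nonempty) :
    ∃ p ∈ s, ∃ q ∈ t, IsMaxOn f s p ∧ IsMaxOn f t q ∧ UniqueAdd s t p q := by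
  obtain ⟨a, ha, hmaxa⟩ := s.exists_max_image f hs
  obtain ⟨b, hb, hmaxb⟩ := t.exists_max_image f ht
  have unique_image : UniqueAdd (s.image f) (t.image f) (f a) (f b) := by
    intro x y hx hy hxy
    obtain ⟨c, hc, rfl⟩ := Finset.mem_image.1 hx
    obtain ⟨d, hd, rfl⟩ := Finset.mem_image.1 hy
    exact (add_eq_add_iff_eq_and_eq (hmaxa c hc) (hmaxb d hd)).1 hxy
  obtain ⟨p, hp, q, hq, unique_face⟩ := UniqueSums.uniqueAdd_of_nonempty
    (A := {u ∈ s | f u = f a}) (B := {u ∈ t | f u = f b})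
    ⟨a, Finset.mem_filter.2 ⟨ha, rfl⟩⟩ ⟨b, Finset.mem_filter.2 ⟨hb, rfl⟩⟩
  obtain ⟨hps, hpa⟩ := Finset.mem_filter.1 hp
  obtain ⟨hqt, hqb⟩ := Finset.mem_filter.1 hq
  exact ⟨p, hps, q, hqt, fun c hc ↦ (hmaxa c hc).trans_eq hpa.symm,
    fun d hd ↦ (hmaxb d hd).trans_eq hqb.symm,
    UniqueAdd.of_image_filter f hpa hqb unique_image unique_face⟩

theorem exists_isMaxOn_add_mem_support_mul {R : Type*} [Semiring R] [NoZeroDivisors R]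
    (f : A →ₙ+ M) {F G : AddMonoidAlgebra R A} (hF : F.coeff.support.Nonempty)
    (hG : G.coeff.support.Nonempty) :
    ∃ p q, IsMaxOn f F.coeff.support p ∧ IsMaxOn f G.coeff.support q ∧
      p + q ∈ (F * G).coeff.support := by
  obtain ⟨p, hp, q, hq, hmaxp, hmaxq, hpq⟩ := exists_isMaxOn_uniqueAdd f hF hG
  refine ⟨p, q, hmaxp, hmaxq, Finsupp.mem_support_iff.2 ?_⟩
  rw [AddMonoidAlgebra.coeff_mul_add_of_uniqueAdd hpq]
  exact mul_ne_zero (Finsupp.mem_support_iff.1 hp) (Finsupp.mem_support_iff.1 hq)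

end UniqueSums

section LocallyConvex

variable {E : Type*} [AddCommGroup E] [Module ℝ E] [TopologicalSpace E] [IsTopologicalAddGroup E]
  [ContinuousSMul ℝ E] [LocallyConvexSpace ℝ E]

theorem mem_convexHull_of_forall_exists_le {s : Set E} (hs : IsClosed (convexHull ℝ s)) {x : E}
    (h : ∀ f : StrongDual ℝ E, ∃ y ∈ s, f x ≤ f y) : x ∈ convexHull ℝ s := by
  rw [← iInter_halfSpaces_eq (convex_convexHull ℝ s) hs, Set.mem_iInter]
  intro f
  obtain ⟨y, hy, hxy⟩ := h f
  exact ⟨y, subset_convexHull ℝ s hy, hxy⟩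

theorem convexHull_image_support_mul [T2Space E] {R A : Type*} [Semiring R] [NoZeroDivisors R]
    [Add A] [UniqueSums A] (φ : A →ₙ+ E) (F G : AddMonoidAlgebra R A) :
    convexHull ℝ (φ '' (F * G).coeff.support) =
      convexHull ℝ (φ '' F.coeff.support) + convexHull ℝ (φ '' G.coeff.support) := by
  classical
  rw [← convexHull_add, ← Set.image_add, ← Finset.coe_add]
  refine (convexHull_mono (Set.image_mono ?_)).antisymm
    (convexHull_min ?_ (convex_convexHull ℝ _))
  · exact Finset.coe_subset.2 (AddMonoidAlgebra.support_coeff_mul_subset F G)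
  · rintro _ ⟨_, hab, rfl⟩
    obtain ⟨a, ha, b, hb, rfl⟩ := Finset.mem_add.1 hab
    refine mem_convexHull_of_forall_exists_le
      (((F * G).coeff.support.finite_toSet.image φ).isClosed_convexHull ℝ) fun f ↦ ?_
    obtain ⟨p, q, hmaxp, hmaxq, hpq⟩ :=
      exists_isMaxOn_add_mem_support_mul ((f : E →ₙ+ ℝ).comp φ) ⟨a, ha⟩ ⟨b, hb⟩
    refine ⟨φ (p + q), Set.mem_image_of_mem φ hpq, ?_⟩
    calc
      f (φ (a + b)) = f (φ a) + f (φ b) := by rw [map_add, map_add]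
      _ ≤ f (φ p) + f (φ q) := add_le_add (hmaxp ha) (hmaxq hb)
      _ = f (φ (p + q)) := by rw [map_add, map_add]

end LocallyConvex

theorem emb_add (n : ℕ) (u v : Fin n → ℤ) : emb n (u + v) = emb n u + emb n v :=
  funext fun i ↦ Int.cast_add (u i) (v i)

theorem newton_eq_convexHull_support {R : Type*} [CommSemiring R] {n : ℕ}
    (F : AddMonoidAlgebra R (Fin n → ℤ)) :
    newton F = convexHull ℝ (emb n '' F.coeff.support) := by
  rw [← Finsupp.fun_support_eq]
  rfl

theorem newton_mul_general {R : Type*} [CommSemiring R] [NoZeroDivisors R] {n : ℕ}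
    (F G : AddMonoidAlgebra R (Fin n → ℤ)) : newton (F * G) = newton F + newton G := by
  simp only [newton_eq_convexHull_support]
  exact convexHull_image_support_mul ⟨emb n, emb_add n⟩ F G

/-- For a commutative integral domain `R`, `n ≥ 1`, and nonzero Laurent polynomials
`F, G ∈ R[x₁,x₁⁻¹,…,xₙ,xₙ⁻¹]`, the Newton polytope of `F·G` is the Minkowski sum of the
Newton polytopes of `F` and `G`. -/
theorem newton_mul {R : Type*} [CommRing R] [IsDomain R] {n : ℕ} (hn : 1 ≤ n)
    (F G : AddMonoidAlgebra R (Fin n → ℤ)) (hF : F ≠ 0) (hG : G ≠ 0) :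
    newton (F * G) = newton F + newton G :=
  newton_mul_general F G
end
end

section
/- Let R be a commutative integral domain, let n ≥ 1, let F be a nonzero Laurent polynomial in n variables over R, and let s be a positive integer. Then the Newton polytope of F^s equals the s-fold dilation of the Newton polytope of F: Δ(F^s) = s • Δ(F), where s • Δ(F) denotes the image of Δ(F) under scalar multiplication by s in ℝⁿ. -/
open scoped Pointwise

noncomputable section

/-!
The inclusion `Δ(F ^ s) ⊆ s • Δ(F)` holds because the support of a product lies in the sum of the
supports, and `k • P + P = (k + 1) • P` for convex `P`. For the other inclusion it suffices, by
Krein–Milman, to treat the vertices of `Δ(F)`. If `u` is a vertex, then `k • u + u` is a vertex of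
`k • Δ(F) + Δ(F)`. A vertex `x + y` of a Minkowski sum `P + Q` splits into summands in only one way:
if also `x + y = a + b`, then it is the midpoint of `x + b` and `a + y`, which lie in `P + Q` too.
So no other pair of monomials interferes in the product `F ^ k * F`, and inductively
`[F ^ s]_{s • u} = ([F]_u) ^ s`, which is nonzero as soon as the coefficient ring is reduced.
-/

section Convexity

lemma natCast_succ_smul_eq_add_of_convex {𝕜 E : Type*} [Field 𝕜] [LinearOrder 𝕜]
    [IsStrictOrderedRing 𝕜] [AddCommGroup E] [Module 𝕜 E] {P : Set E} (hP : Convex 𝕜 P) (k : ℕ) :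
    ((k + 1 : ℕ) : 𝕜) • P = (k : 𝕜) • P + P := by
  rw [Nat.cast_succ, hP.add_smul k.cast_nonneg zero_le_one, one_smul]

lemma eq_and_eq_of_add_mem_extremePoints_add {𝕜 E : Type*} [Field 𝕜] [LinearOrder 𝕜]
    [IsStrictOrderedRing 𝕜] [AddCommGroup E] [Module 𝕜 E] {P Q : Set E} {x y x' y' : E}
    (hx : x ∈ P) (hy : y ∈ Q) (hxy : x + y ∈ (P + Q).extremePoints 𝕜)
    (hx' : x' ∈ P) (hy' : y' ∈ Q) (h : x' + y' = x + y) : x' = x ∧ y' = y := by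
  have hmid : x + y ∈ openSegment 𝕜 (x + y') (x' + y) := by
    have : midpoint 𝕜 (x + y') (x' + y) = x + y := by
      rw [midpoint_eq_smul_add, show x + y' + (x' + y) = (x + y) + (x' + y') by abel, h,
        ← two_smul 𝕜 (x + y), invOf_smul_smul]
    exact this ▸ midpoint_mem_openSegment _ _
  obtain ⟨hleft, hright⟩ := (mem_extremePoints.1 hxy).2 _ (Set.add_mem_add hx hy')
    _ (Set.add_mem_add hx' hy) hmid
  exact ⟨add_right_cancel hright, add_left_cancel hleft⟩

lemma smul_mem_extremePoints_smul {𝕜 E : Type*} [Field 𝕜] [PartialOrder 𝕜] [IsOrderedRing 𝕜]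
    [AddCommGroup E] [Module 𝕜 E] {P : Set E} {x : E} {c : 𝕜} (hc : c ≠ 0)
    (hx : x ∈ P.extremePoints 𝕜) : c • x ∈ (c • P).extremePoints 𝕜 :=
  image_extremePoints (LinearEquiv.smulOfNeZero 𝕜 E c hc) P ▸ Set.mem_image_of_mem _ hx

lemma convexHull_extremePoints_convexHull {E : Type*} [AddCommGroup E] [Module ℝ E]
    [TopologicalSpace E] [T2Space E] [IsTopologicalAddGroup E] [ContinuousSMul ℝ E]
    [LocallyConvexSpace ℝ E] {S : Set E} (hS : S.Finite) :
    convexHull ℝ ((convexHull ℝ S).extremePoints ℝ) = convexHull ℝ S := by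
  have hfin : ((convexHull ℝ S).extremePoints ℝ).Finite := hS.subset extremePoints_convexHull_subset
  rw [← (hfin.isClosed_convexHull ℝ).closure_eq]
  exact closure_convexHull_extremePoints (hS.isCompact_convexHull ℝ) (convex_convexHull ℝ S)

end Convexity

section NewtonPolytope

open Function (Injective support)

variable {R A E : Type*} [Semiring R] [AddMonoid A] [AddCommGroup E] [Module ℝ E]
  {φ : A →+ E} {F G : AddMonoidAlgebra R A}

/-- The Newton polytope of an element `F` of the monoid algebra `R[A]` with respect to a
realisation `φ` of the exponents as points of a real vector space. For `A = ℤⁿ` and `φ` the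
inclusion into `ℝⁿ` this is `newton`. -/
def newtonPolytope (φ : A →+ E) (F : AddMonoidAlgebra R A) : Set E :=
  convexHull ℝ (φ '' support F.coeff)

lemma convex_newtonPolytope : Convex ℝ (newtonPolytope φ F) :=
  convex_convexHull ℝ _

lemma map_mem_newtonPolytope {u : A} (hu : F.coeff u ≠ 0) : φ u ∈ newtonPolytope φ F :=
  subset_convexHull ℝ _ (Set.mem_image_of_mem φ hu)

lemma newtonPolytope_nonempty (hF : F ≠ 0) : (newtonPolytope φ F).Nonempty := by
  obtain ⟨u, hu⟩ := Finsupp.ne_iff.1 (mt AddMonoidAlgebra.coeff_eq_zero.1 hF)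
  exact ⟨φ u, map_mem_newtonPolytope hu⟩

lemma newtonPolytope_one_subset : newtonPolytope φ (1 : AddMonoidAlgebra R A) ⊆ 0 := by
  refine convexHull_min ?_ (convex_singleton 0)
  rintro _ ⟨u, hu, rfl⟩
  have hu0 : u = 0 := by
    simpa using AddMonoidAlgebra.support_coeff_one_subset (Finsupp.mem_support_iff.2 hu)
  simp [hu0]

lemma newtonPolytope_mul_subset :
    newtonPolytope φ (F * G) ⊆ newtonPolytope φ F + newtonPolytope φ G := by
  classical
  refine convexHull_min ?_ (convex_newtonPolytope.add convex_newtonPolytope)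
  rintro _ ⟨u, hu, rfl⟩
  obtain ⟨a, ha, b, hb, rfl⟩ := Finset.mem_add.1 <|
    AddMonoidAlgebra.support_coeff_mul_subset F G (Finsupp.mem_support_iff.2 hu)
  rw [map_add]
  exact Set.add_mem_add (map_mem_newtonPolytope (Finsupp.mem_support_iff.1 ha))
    (map_mem_newtonPolytope (Finsupp.mem_support_iff.1 hb))

lemma newtonPolytope_pow_subset (hF : (newtonPolytope φ F).Nonempty) (s : ℕ) :
    newtonPolytope φ (F ^ s) ⊆ (s : ℝ) • newtonPolytope φ F := by
  induction s with
  | zero =>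
    rw [pow_zero, Nat.cast_zero, Set.zero_smul_set hF]
    exact newtonPolytope_one_subset
  | succ k ih =>
    rw [pow_succ, natCast_succ_smul_eq_add_of_convex convex_newtonPolytope]
    exact newtonPolytope_mul_subset.trans (Set.add_subset_add_right ih)

lemma coeff_mul_add_of_mem_extremePoints (hφ : Injective φ) {P Q : Set E}
    (hP : Set.MapsTo φ (support F.coeff) P) (hQ : Set.MapsTo φ (support G.coeff) Q)
    {u v : A} (hu : φ u ∈ P) (hv : φ v ∈ Q)
    (huv : φ u + φ v ∈ (P + Q).extremePoints ℝ) :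
    (F * G).coeff (u + v) = F.coeff u * G.coeff v := by
  refine AddMonoidAlgebra.coeff_mul_add_of_uniqueAdd fun a b ha hb hab ↦ ?_
  obtain ⟨hau, hbv⟩ := eq_and_eq_of_add_mem_extremePoints_add hu hv huv
    (hP (Finsupp.mem_support_iff.1 ha)) (hQ (Finsupp.mem_support_iff.1 hb))
    (by rw [← map_add, hab, map_add])
  exact ⟨hφ hau, hφ hbv⟩

lemma coeff_pow_nsmul_of_mem_extremePoints (hφ : Injective φ) {u : A}
    (hu : φ u ∈ (newtonPolytope φ F).extremePoints ℝ) (s : ℕ) :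
    (F ^ s).coeff (s • u) = F.coeff u ^ s := by
  have map_nsmul_eq (k : ℕ) : φ (k • u) = (k : ℝ) • φ u := by
    rw [map_nsmul, Nat.cast_smul_eq_nsmul]
  induction s with
  | zero => simp
  | succ k ih =>
    have hmem : φ (k • u) ∈ (k : ℝ) • newtonPolytope φ F :=
      map_nsmul_eq k ▸ Set.smul_mem_smul_set hu.1
    have hextreme : φ (k • u) + φ u ∈
        ((k : ℝ) • newtonPolytope φ F + newtonPolytope φ F).extremePoints ℝ := by
      rw [← map_add, ← succ_nsmul, map_nsmul_eq,
        ← natCast_succ_smul_eq_add_of_convex convex_newtonPolytope]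
      exact smul_mem_extremePoints_smul (Nat.cast_ne_zero.2 k.succ_ne_zero) hu
    have hsupport : Set.MapsTo φ (support (F ^ k).coeff) ((k : ℝ) • newtonPolytope φ F) :=
      fun _ ha ↦ newtonPolytope_pow_subset ⟨φ u, hu.1⟩ k (map_mem_newtonPolytope ha)
    rw [pow_succ, succ_nsmul, coeff_mul_add_of_mem_extremePoints hφ hsupport
      (fun _ ↦ map_mem_newtonPolytope) hmem hu.1 hextreme, ih, pow_succ]

lemma smul_newtonPolytope_subset_pow [IsReduced R] [TopologicalSpace E] [T2Space E]
    [IsTopologicalAddGroup E] [ContinuousSMul ℝ E] [LocallyConvexSpace ℝ E]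
    (hφ : Injective φ) (s : ℕ) :
    (s : ℝ) • newtonPolytope φ F ⊆ newtonPolytope φ (F ^ s) := by
  have hfin : (φ '' support F.coeff).Finite := F.coeff.hasFiniteSupport.image φ
  rw [newtonPolytope, ← convexHull_extremePoints_convexHull hfin, ← convexHull_smul]
  refine convexHull_min ?_ convex_newtonPolytope
  rintro _ ⟨x, hx, rfl⟩
  obtain ⟨u, hu, rfl⟩ := extremePoints_convexHull_subset hx
  have hcoeff : (F ^ s).coeff (s • u) ≠ 0 := by
    rw [coeff_pow_nsmul_of_mem_extremePoints hφ hx]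
    exact pow_ne_zero s hu
  simpa [Nat.cast_smul_eq_nsmul] using map_mem_newtonPolytope (φ := φ) hcoeff

theorem newton_pow_general [IsReduced R] [TopologicalSpace E] [T2Space E]
    [IsTopologicalAddGroup E] [ContinuousSMul ℝ E] [LocallyConvexSpace ℝ E]
    (hφ : Injective φ) (hF : F ≠ 0) (s : ℕ) :
    newtonPolytope φ (F ^ s) = (s : ℝ) • newtonPolytope φ F :=
  (newtonPolytope_pow_subset (newtonPolytope_nonempty hF) s).antisymm
    (smul_newtonPolytope_subset_pow hφ s)

end NewtonPolytope

/-- For a commutative integral domain `R`, `n ≥ 1`, a nonzero Laurent polynomial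
`F ∈ R[x₁,x₁⁻¹,…,xₙ,xₙ⁻¹]`, and a positive integer `s`, the Newton polytope of `F^s` is the
`s`-fold dilation `s • Δ(F)` of the Newton polytope of `F`, i.e. the image of `Δ(F)` under
scalar multiplication by `s` in `ℝⁿ`. -/
theorem newton_pow {R : Type*} [CommRing R] [IsDomain R] {n : ℕ} (hn : 1 ≤ n)
    (F : AddMonoidAlgebra R (Fin n → ℤ)) (hF : F ≠ 0) (s : ℕ) (hs : 1 ≤ s) :
    newton (F ^ s) = (s : ℝ) • newton F :=
  newton_pow_general (φ := (Int.castAddHom ℝ).compLeft (Fin n)) Int.cast_injective.comp_left hF s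
end
end

section
/- For every H ∈ ℤ_q[x^±] and every integer m ≥ 1, one has A_H^m = ψ^m ∘ T_{H^{(m)}}; that is, for every G ∈ ℤ_q[x^±], applying A_H m times to G yields the same result as ψ applied m times to H^{(m)}·G. -/
open WittVector

noncomputable section

variable (p : ℕ) [Fact p.Prime] (a n : ℕ)

/-- The finite field `𝔽_q` with `q = p^a` elements. -/
abbrev Fq := GaloisField p a

/-- The ring `ℤ_q` of `p`-typical Witt vectors of `𝔽_q`. -/
abbrev Zq := WittVector p (Fq p a)

/-- The Witt-vector Frobenius automorphism `φ` of `ℤ_q`. -/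
def φW : Zq p a ≃+* Zq p a := WittVector.frobeniusEquiv p (Fq p a)

/-- The ring `ℤ_q[x^±]` of Laurent polynomials in `n` variables over `ℤ_q`. -/
abbrev LP := AddMonoidAlgebra (Zq p a) (Fin n → ℤ)

/-- The map `φ` on Laurent polynomials: `φ(G) = Σ_u φ([G]_u) x^{pu}`. -/
def φL (G : LP p a n) : LP p a n :=
  Finsupp.sum G.coeff fun u c => AddMonoidAlgebra.single ((p : ℤ) • u) (φW p a c)

/-- The map `ψ` on Laurent polynomials: `ψ(G) = Σ_u φ⁻¹([G]_{pu}) x^u`. -/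
def ψL (G : LP p a n) : LP p a n :=
  AddMonoidAlgebra.ofCoeff <| Finsupp.mapRange (φW p a).symm (map_zero _)
    (Finsupp.comapDomain (fun u : Fin n → ℤ => (p : ℤ) • u) G.coeff
      ((smul_right_injective (Fin n → ℤ)
        (by exact_mod_cast (Fact.out : p.Prime).ne_zero)).injOn))

/-- The operator `A_H = ψ ∘ T_{H^{p-1}}`, where `T_H` is multiplication by `H`. -/
def A (H : LP p a n) (G : LP p a n) : LP p a n := ψL p a n (H ^ (p - 1) * G)


/-- `H^{(m)} = (H · φ(H) ⋯ φ^{m-1}(H))^{p-1}`. -/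
def Hm (H : LP p a n) (m : ℕ) : LP p a n :=
  ((Finset.range m).prod fun i => (φL p a n)^[i] H) ^ (p - 1)

/-!
The engine is the projection formula `ψ(φ(F)·G) = F·ψ(G)`, which holds because `p u + v = p w`
forces `v = p (w - u)`. Iterating it, a factor `F` outside `ψ^m` can be moved inside at the cost of
replacing it by `φ^m(F)`, so the factors `H^{p-1}` of `A_H^m` collect to `∏_{i < m} φ^i(H^{p-1})`,
which is `H^{(m)}` because `φ` is multiplicative.
-/

section ProjectionFormula

variable {M X : Type*} {φ : M → M} {ψ : X → X}

theorem iterate_iterate_smul [SMul M X] (hψ : ∀ c x, ψ (φ c • x) = c • ψ x) (m : ℕ) (c : M)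
    (x : X) : ψ^[m] (φ^[m] c • x) = c • ψ^[m] x := by
  induction m generalizing x with
  | zero => rfl
  | succ m ih =>
    rw [Function.iterate_succ_apply, Function.iterate_succ_apply', hψ, ih,
      Function.iterate_succ_apply]

theorem iterate_comp_smul_eq_iterate_prod_smul [CommMonoid M] [MulAction M X]
    (hψ : ∀ c x, ψ (φ c • x) = c • ψ x) (c : M) (m : ℕ) (x : X) :
    (fun y => ψ (c • y))^[m] x = ψ^[m] ((∏ i ∈ Finset.range m, φ^[i] c) • x) := by
  induction m with
  | zero => simp
  | succ m ih =>
    calc (fun y => ψ (c • y))^[m + 1] x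
        = ψ (c • ψ^[m] ((∏ i ∈ Finset.range m, φ^[i] c) • x)) := by
          rw [Function.iterate_succ_apply', ih]
      _ = ψ (ψ^[m] (φ^[m] c • (∏ i ∈ Finset.range m, φ^[i] c) • x)) := by
          rw [iterate_iterate_smul hψ]
      _ = ψ^[m + 1] ((∏ i ∈ Finset.range (m + 1), φ^[i] c) • x) := by
          rw [← Function.iterate_succ_apply' ψ, smul_smul, Finset.prod_range_succ_comm]

end ProjectionFormula

section GroupAlgebra

open AddMonoidAlgebra

variable {R M : Type*}

section AddMonoid

variable [Semiring R] [AddMonoid M] (σ : R ≃+* R) (e : M →+ M)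

/-- The lift of Frobenius `∑ c_u x^u ↦ ∑ σ(c_u) x^{e(u)}` on a monoid algebra, for an automorphism
`σ` of the coefficients and an endomorphism `e` of the exponents; `φ` is the case where `e` is
multiplication by `p`. -/
def frobeniusLift : AddMonoidAlgebra R M →+* AddMonoidAlgebra R M :=
  (mapDomainRingHom R e).comp (mapRingHom M (σ : R →+* R))

/-- The Cartier operator `G ↦ ∑ σ⁻¹([G]_{e(u)}) x^u`, a left inverse of `frobeniusLift σ e`; `ψ` is
the case where `e` is multiplication by `p`. Injectivity of `e` ensures that the sum is
finite. -/
def cartierOperator (he : Function.Injective e) :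
    AddMonoidAlgebra R M →+ AddMonoidAlgebra R M :=
  (mapRingHom M (σ.symm : R →+* R)).toAddMonoidHom.comp (comapDomainAddMonoidHom e he)

theorem frobeniusLift_single (u : M) (c : R) :
    frobeniusLift σ e (single u c) = single (e u) (σ c) := by
  simp [frobeniusLift]

theorem coeff_cartierOperator (he : Function.Injective e) (G : AddMonoidAlgebra R M) (u : M) :
    (cartierOperator σ e he G).coeff u = σ.symm (G.coeff (e u)) := rfl

end AddMonoid

theorem cartierOperator_frobeniusLift_mul [Semiring R] [AddGroup M] (σ : R ≃+* R) (e : M →+ M)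
    (he : Function.Injective e) (F G : AddMonoidAlgebra R M) :
    cartierOperator σ e he (frobeniusLift σ e F * G) = F * cartierOperator σ e he G := by
  induction F using AddMonoidAlgebra.induction_linear with
  | zero => simp only [map_zero, zero_mul]
  | add F F' hF hF' => simp only [map_add, add_mul, hF, hF']
  | single u c =>
    ext w
    simp only [frobeniusLift_single, coeff_cartierOperator, coeff_single_mul_apply, map_mul,
      RingEquiv.symm_apply_apply, map_add, map_neg]

theorem A_iterate_eq_general [CommSemiring R] [AddCommGroup M] (σ : R ≃+* R)
    (e : M →+ M) (he : Function.Injective e) (k : ℕ) (H : AddMonoidAlgebra R M) (m : ℕ)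
    (G : AddMonoidAlgebra R M) :
    (fun F => cartierOperator σ e he (H ^ k * F))^[m] G =
      (cartierOperator σ e he)^[m]
        ((∏ i ∈ Finset.range m, (frobeniusLift σ e)^[i] H) ^ k * G) := by
  rw [← Finset.prod_pow]
  simp only [← iterate_map_pow]
  exact iterate_comp_smul_eq_iterate_prod_smul
    (cartierOperator_frobeniusLift_mul σ e he) (H ^ k) m G

end GroupAlgebra

theorem φL_eq_frobeniusLift :
    φL p a n = frobeniusLift (φW p a) (zsmulAddGroupHom (p : ℤ)) := by
  funext G
  induction G using AddMonoidAlgebra.induction_linear with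
  | zero => simp [φL]
  | add F G hF hG =>
    rw [map_add, ← hF, ← hG]
    exact Finsupp.sum_add_index' (by simp) (by simp)
  | single u c =>
    rw [frobeniusLift_single]
    exact Finsupp.sum_single_index (by simp)

theorem zsmulAddGroupHom_prime_injective :
    Function.Injective (zsmulAddGroupHom (p : ℤ) : (Fin n → ℤ) →+ (Fin n → ℤ)) :=
  zsmul_right_injective (Nat.cast_ne_zero.mpr (Fact.out : p.Prime).ne_zero)

theorem ψL_eq_cartierOperator :
    ψL p a n = cartierOperator (φW p a) _ (zsmulAddGroupHom_prime_injective p n) := rfl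

/-- For every `H ∈ ℤ_q[x^±]` and every `m ≥ 1`, one has `A_H^m = ψ^m ∘ T_{H^{(m)}}`:
applying `A_H` `m` times to any `G` equals applying `ψ` `m` times to `H^{(m)}·G`. -/
theorem A_iterate_eq (ha : 1 ≤ a) (hn : 1 ≤ n) (H : LP p a n) (m : ℕ) (hm : 1 ≤ m)
    (G : LP p a n) :
    (A p a n H)^[m] G = (ψL p a n)^[m] (Hm p a n H m * G) := by
  rw [Hm, φL_eq_frobeniusLift, ψL_eq_cartierOperator]
  exact A_iterate_eq_general (φW p a) _ (zsmulAddGroupHom_prime_injective p n) (p - 1) H m G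
end
end

section
/- Let K ⊆ ℝⁿ be a convex polytope with integral vertices (i.e., the convex hull of a finite set of points of ℤⁿ) and let H ∈ ℤ_q[x^±] satisfy Δ(H) ⊆ K. If G ∈ ℤ_q[x^±] has all of its exponents in K ∩ ℤⁿ (i.e., [G]_u = 0 whenever u ∉ K), then A_H(G) also has all of its exponents in K ∩ ℤⁿ. In other words, A_H maps the ℤ_q-submodule P_K = ⊕_{u ∈ K ∩ ℤⁿ} ℤ_q·x^u into itself. -/
open WittVector

noncomputable section

variable (p : ℕ) [Fact p.Prime] (a n : ℕ)

open scoped Pointwise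

/- The exponents of `H ^ (p - 1) * G` are sums of `p` points of `K`, and such sums lie in the dilate
`p • K` because `K` is convex. Since `ψ` only retains the exponents divisible by `p` and divides
them by `p`, it brings them back into `K`. -/

section Supported

variable {R M : Type*} [Semiring R]

theorem mul_mem_supported [Add M] {S T : Set M} {F G : AddMonoidAlgebra R M}
    (hF : F ∈ AddMonoidAlgebra.supported R R S) (hG : G ∈ AddMonoidAlgebra.supported R R T) :
    F * G ∈ AddMonoidAlgebra.supported R R (S + T) := by
  classical
  rw [AddMonoidAlgebra.mem_supported] at hF hG ⊢
  calc ((F * G).coeff.support : Set M)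
      ⊆ ↑(F.coeff.support + G.coeff.support) :=
        Finset.coe_subset.2 (AddMonoidAlgebra.support_coeff_mul_subset F G)
    _ = ↑F.coeff.support + ↑G.coeff.support := Finset.coe_add _ _
    _ ⊆ S + T := Set.add_subset_add hF hG

theorem pow_mul_mem_supported_preimage_smul {𝕜 E : Type*} [Field 𝕜] [LinearOrder 𝕜]
    [IsStrictOrderedRing 𝕜] [AddMonoid M] [AddCommGroup E] [Module 𝕜 E] (f : M →ₙ+ E)
    {K : Set E} (hK : Convex 𝕜 K) {F G : AddMonoidAlgebra R M}
    (hF : F ∈ AddMonoidAlgebra.supported R R (f ⁻¹' K))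
    (hG : G ∈ AddMonoidAlgebra.supported R R (f ⁻¹' K)) (k : ℕ) :
    F ^ k * G ∈ AddMonoidAlgebra.supported R R (f ⁻¹' (((k + 1 : ℕ) : 𝕜) • K)) := by
  induction k with
  | zero => simpa only [pow_zero, one_mul, zero_add, Nat.cast_one, one_smul] using hG
  | succ k ih =>
    have dilate_succ : ((k + 1 + 1 : ℕ) : 𝕜) • K = K + ((k + 1 : ℕ) : 𝕜) • K := by
      rw [Nat.cast_succ (k + 1), add_comm, hK.add_smul zero_le_one (Nat.cast_nonneg _), one_smul]
    rw [pow_succ', mul_assoc, dilate_succ]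
    exact AddMonoidAlgebra.supported_mono (Set.preimage_add_preimage_subset f)
      (mul_mem_supported hF ih)

end Supported

theorem newton_subset_iff {R : Type*} [CommSemiring R] {n : ℕ}
    {F : AddMonoidAlgebra R (Fin n → ℤ)} {K : Set (Fin n → ℝ)} (hK : Convex ℝ K) :
    newton F ⊆ K ↔ F ∈ AddMonoidAlgebra.supported R R (emb n ⁻¹' K) := by
  rw [newton, hK.convexHull_subset_iff, Set.image_subset_iff, AddMonoidAlgebra.mem_supported,
    ← Finsupp.fun_support_eq]
  rfl

/-- The embedding `emb n` of `ℤⁿ` into `ℝⁿ`, bundled as an additive map. -/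
def embAddHom (n : ℕ) : (Fin n → ℤ) →ₙ+ (Fin n → ℝ) where
  toFun := emb n
  map_add' u v := funext fun i => Int.cast_add (u i) (v i)

theorem emb_zsmul (n : ℕ) (m : ℤ) (u : Fin n → ℤ) : emb n (m • u) = (m : ℝ) • emb n u :=
  funext fun i => Int.cast_mul m (u i)

/-- The submodule `P_K` of the Laurent polynomials with all exponents in `K ∩ ℤⁿ`, for an arbitrary
subset `K` of `ℝⁿ`. -/
abbrev PK (K : Set (Fin n → ℝ)) : Submodule (Zq p a) (LP p a n) :=
  AddMonoidAlgebra.supported (Zq p a) (Zq p a) (emb n ⁻¹' K)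

theorem coeff_ψL (G : LP p a n) (u : Fin n → ℤ) :
    (ψL p a n G).coeff u = (φW p a).symm (G.coeff ((p : ℤ) • u)) :=
  rfl

theorem ψL_mem_PK {K : Set (Fin n → ℝ)} {G : LP p a n} (hG : G ∈ PK p a n ((p : ℝ) • K)) :
    ψL p a n G ∈ PK p a n K := by
  have hp : (p : ℝ) ≠ 0 := Nat.cast_ne_zero.2 (Fact.out : p.Prime).ne_zero
  rw [AddMonoidAlgebra.mem_supported'] at hG ⊢
  intro u (hu : emb n u ∉ K)
  have hpu : emb n ((p : ℤ) • u) ∉ (p : ℝ) • K := by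
    rwa [emb_zsmul, Int.cast_natCast, Set.smul_mem_smul_set_iff₀ hp]
  rw [coeff_ψL, hG _ hpu, map_zero]

theorem A_maps_PK_to_PK_general {K : Set (Fin n → ℝ)} (hK : Convex ℝ K) {H G : LP p a n}
    (hH : newton H ⊆ K) (hG : G ∈ PK p a n K) : A p a n H G ∈ PK p a n K := by
  have hprod := pow_mul_mem_supported_preimage_smul (embAddHom n) hK
    ((newton_subset_iff hK).1 hH) hG (p - 1)
  rw [Nat.sub_add_cancel (Fact.out : p.Prime).one_le] at hprod
  exact ψL_mem_PK p a n hprod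

/-- Let `K ⊆ ℝⁿ` be a convex polytope with integral vertices (the convex hull of a finite
set `S ⊆ ℤⁿ`) and `H ∈ ℤ_q[x^±]` with `Δ(H) ⊆ K`.  If `G` has all its exponents in
`K ∩ ℤⁿ` (i.e. `[G]_u = 0` whenever `u ∉ K`), then so does `A_H(G)`; that is, `A_H` maps
`P_K` into itself. -/
theorem A_maps_PK_to_PK (ha : 1 ≤ a) (hn : 1 ≤ n) (S : Finset (Fin n → ℤ))
    (H : LP p a n) (hH : newton H ⊆ convexHull ℝ (emb n '' (S : Set (Fin n → ℤ))))
    (G : LP p a n)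
    (hG : ∀ u : Fin n → ℤ, emb n u ∉ convexHull ℝ (emb n '' (S : Set (Fin n → ℤ))) → G.coeff u = 0) :
    ∀ v : Fin n → ℤ, emb n v ∉ convexHull ℝ (emb n '' (S : Set (Fin n → ℤ))) →
      (A p a n H G).coeff v = 0 := by
  have hGPK : G ∈ PK p a n _ := AddMonoidAlgebra.mem_supported'.2 hG
  exact AddMonoidAlgebra.mem_supported'.1
    (A_maps_PK_to_PK_general p a n (convex_convexHull ℝ _) hH hGPK)
end
end
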